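/- arXiv:1209.4972 — 2 statements merged into one kernel-verified Lean document; each statement's English description precedes it below -/
import Mathlib

section
/- Let G be a connected unicyclic graph of the form G = C_l ∪ (P_1 ∪ ⋯ ∪ P_r) with l ≥ 5, where C_l is a cycle of length l, each P_i is a path graph with |V(P_i) ∩ V(C_l)| = 1, and the P_i are pairwise vertex-disjoint. Then J_G is not unmixed. -/
open MvPolynomial

noncomputable section

/-- The binomial edge ideal of a simple graph `G` on vertex type `V`, inside the
polynomial ring `K[x_i, y_i : i ∈ V]`, modelled as `MvPolynomial (V ⊕ V) K`
with `x_i = X (Sum.inl i)` and `y_i = X (Sum.inr i)`. -/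
def binomialEdgeIdeal (K : Type*) [Field K] {V : Type*} (G : SimpleGraph V) :
    Ideal (MvPolynomial (V ⊕ V) K) :=
  Ideal.span { f | ∃ i j : V, G.Adj i j ∧
    f = X (Sum.inl i) * X (Sum.inr j) - X (Sum.inl j) * X (Sum.inr i) }

/-- The minimal number of generators of an ideal. -/
def mu {R : Type*} [CommRing R] (J : Ideal R) : ℕ :=
  sInf {k | ∃ s : Finset R, s.card = k ∧ Ideal.span (s : Set R) = J}

/-- The height of an ideal: the infimum of the heights of the primes containing it. -/
def htI {R : Type*} [CommRing R] (I : Ideal R) : ℕ∞ :=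
  ⨅ (P : PrimeSpectrum R) (_ : I ≤ P.asIdeal), Order.height P

/-- An ideal is unmixed if all of its minimal primes have height equal to its height. -/
def IsUnmixed {R : Type*} [CommRing R] (I : Ideal R) : Prop :=
  ∀ P ∈ I.minimalPrimes, htI P = htI I

/-- The depth of a ring `R` with respect to an ideal `m`: the supremum of the
lengths of regular sequences on `R` consisting of elements of `m`. -/
def ringDepth (R : Type*) [CommRing R] (m : Ideal R) : ℕ∞ :=
  sSup {d : ℕ∞ | ∃ l : List R, (l.length : ℕ∞) = d ∧ (∀ x ∈ l, x ∈ m) ∧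
    RingTheory.Sequence.IsRegular R l}

/-- The graded maximal ideal of the quotient of a polynomial ring by an ideal `J`:
the image of the ideal generated by all the variables. -/
def gradedMaxQuot {K σ : Type*} [Field K] (J : Ideal (MvPolynomial σ K)) :
    Ideal (MvPolynomial σ K ⧸ J) :=
  (Ideal.span (Set.range (X : σ → MvPolynomial σ K))).map (Ideal.Quotient.mk J)

/-- `S/J` is Cohen–Macaulay: its depth with respect to the graded maximal ideal
equals its Krull dimension. -/
def IsCMQuot {K σ : Type*} [Field K] (J : Ideal (MvPolynomial σ K)) : Prop :=
  (ringDepth (MvPolynomial σ K ⧸ J) (gradedMaxQuot J) : WithBot ℕ∞) =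
    ringKrullDim (MvPolynomial σ K ⧸ J)

/-- A graph is a path graph if its vertices can be ordered `v_1, …, v_m` so that
its edges are exactly `{v_i, v_{i+1}}` for `1 ≤ i ≤ m - 1`. -/
def IsPathGraph {V : Type*} (H : SimpleGraph V) : Prop :=
  ∃ (m : ℕ) (e : V ≃ Fin m), ∀ a b : V,
    H.Adj a b ↔ ((e a : ℕ) + 1 = (e b : ℕ) ∨ (e b : ℕ) + 1 = (e a : ℕ))

/-- The vertex set of a connected component, as a set of vertices. -/
def compSupp {V : Type*} (G : SimpleGraph V) (c : G.ConnectedComponent) : Set V :=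
  {v | G.connectedComponentMk v = c}

end

noncomputable section

/-- A graph is a cycle graph of length `l` if its vertices can be arranged in a
cyclic order `v_1, …, v_l` so that its edges are exactly the consecutive ones
(indices mod `l`). -/
def IsCycleGraphOfLength {V : Type*} (H : SimpleGraph V) (l : ℕ) : Prop :=
  ∃ e : V ≃ Fin l, ∀ a b : V,
    H.Adj a b ↔ (((e a : ℕ) + 1) % l = (e b : ℕ) ∨ ((e b : ℕ) + 1) % l = (e a : ℕ))

/-!
The minimal primes of `J_G` for connected `G` are the ideals `P_S(G)`, where `S` runs over the
vertex sets such that every `s ∈ S` is a cut point of `G - (S \ {s})`, and `P_S(G)` has height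
`|V| - c(S) + |S|`, where `c(S)` is the number of components of `G - S`. Comparing with `S = ∅`,
unmixedness forces `c(S) = |S| + 1` for all of them. Two nonadjacent vertices `u`, `v` on the cycle
of a connected unicyclic graph form such a set, and counting edges of the forest `G - {u, v}` gives
`c({u, v}) = deg u + deg v - 2`, so `deg u + deg v = 5`. If the cycle has length at least `5`, its
vertices `0, 2, 4, 1, 3` form a closed chain of five nonadjacent pairs; going around it yields
`2 * deg = 5`, a contradiction.
-/

section EdgeBinomial

variable (R : Type*) [CommRing R] {V : Type*}

/-- The binomial `f_{ij} = x_i y_j - x_j y_i`. -/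
def edgeBinomial (i j : V) : MvPolynomial (V ⊕ V) R :=
  X (Sum.inl i) * X (Sum.inr j) - X (Sum.inl j) * X (Sum.inr i)

@[simp]
lemma edgeBinomial_self (i : V) : edgeBinomial R i i = 0 :=
  sub_self _

lemma X_inl_mul_edgeBinomial (i j k : V) :
    X (Sum.inl i) * edgeBinomial R j k =
      X (Sum.inl j) * edgeBinomial R i k - X (Sum.inl k) * edgeBinomial R i j := by
  simp only [edgeBinomial]
  ring

lemma X_inr_mul_edgeBinomial (i j k : V) :
    X (Sum.inr i) * edgeBinomial R j k =
      X (Sum.inr j) * edgeBinomial R i k - X (Sum.inr k) * edgeBinomial R i j := by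
  simp only [edgeBinomial]
  ring

variable {R}

lemma X_mem_of_edgeBinomial_notMem {P : Ideal (MvPolynomial (V ⊕ V) R)} [P.IsPrime]
    {s i j : V} (hi : edgeBinomial R s i ∈ P) (hj : edgeBinomial R s j ∈ P)
    (hij : edgeBinomial R i j ∉ P) :
    X (Sum.inl s) ∈ P ∧ X (Sum.inr s) ∈ P := by
  constructor <;> refine (‹P.IsPrime›.mem_or_mem ?_).resolve_right hij
  · rw [X_inl_mul_edgeBinomial]
    exact P.sub_mem (P.mul_mem_left _ hj) (P.mul_mem_left _ hi)
  · rw [X_inr_mul_edgeBinomial]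
    exact P.sub_mem (P.mul_mem_left _ hj) (P.mul_mem_left _ hi)

variable {K : Type*} [Field K]

lemma binomialEdgeIdeal_le_iff {G : SimpleGraph V} {P : Ideal (MvPolynomial (V ⊕ V) K)} :
    binomialEdgeIdeal K G ≤ P ↔ ∀ i j, G.Adj i j → edgeBinomial K i j ∈ P := by
  rw [binomialEdgeIdeal, Ideal.span_le]
  constructor
  · exact fun h i j hij => h ⟨i, j, hij, rfl⟩
  · rintro h _ ⟨i, j, hij, rfl⟩
    exact h i j hij

lemma edgeBinomial_mem_of_reachable_induce {G : SimpleGraph V}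
    {P : Ideal (MvPolynomial (V ⊕ V) K)} [P.IsPrime] (hG : binomialEdgeIdeal K G ≤ P)
    {T : Set V} (hT : ∀ v ∈ T, X (Sum.inl v) ∉ P) {a b : T} (hab : (G.induce T).Reachable a b) :
    edgeBinomial K a.1 b.1 ∈ P := by
  obtain ⟨p⟩ := hab
  induction p with
  | nil => simp
  | @cons a b c hab _ ih =>
    refine (‹P.IsPrime›.mem_or_mem ?_).resolve_left (hT b b.2)
    rw [X_inl_mul_edgeBinomial]
    have hba : edgeBinomial K b.1 a.1 ∈ P := binomialEdgeIdeal_le_iff.mp hG _ _ hab.symm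
    exact P.sub_mem (P.mul_mem_left _ ih) (P.mul_mem_left _ hba)

end EdgeBinomial

section LabelingPrime

variable (K : Type*) [Field K] {V ι κ : Type*}

/-- The substitution `x_v ↦ x_v`, `y_v ↦ x_v t_c` for a vertex `v` with label `c`, where `t_c` is
the variable `Sum.inr c`; both variables of an unlabeled vertex go to `0`. -/
def labelingHom (ℓ : V → Option ι) : MvPolynomial (V ⊕ V) K →ₐ[K] MvPolynomial (V ⊕ ι) K :=
  aeval (Sum.elim (fun v => (ℓ v).elim 0 fun _ => X (Sum.inl v))
    (fun v => (ℓ v).elim 0 fun c => X (Sum.inl v) * X (Sum.inr c)))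

/-- The prime ideal generated by the variables of the unlabeled vertices and by the binomials
`f_{ij}` of the pairs of equally labeled vertices. It is defined as the kernel of its
parametrization, so that primality is immediate. -/
def labelingPrime (ℓ : V → Option ι) : Ideal (MvPolynomial (V ⊕ V) K) :=
  RingHom.ker (labelingHom K ℓ)

instance labelingPrime_isPrime (ℓ : V → Option ι) : (labelingPrime K ℓ).IsPrime :=
  RingHom.ker_isPrime _

variable {K} {ℓ : V → Option ι}

@[simp]
lemma labelingHom_inl (v : V) :
    labelingHom K ℓ (X (Sum.inl v)) = (ℓ v).elim 0 fun _ => X (Sum.inl v) := by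
  simp [labelingHom]

@[simp]
lemma labelingHom_inr (v : V) :
    labelingHom K ℓ (X (Sum.inr v)) =
      (ℓ v).elim 0 fun c => X (Sum.inl v) * X (Sum.inr c) := by
  simp [labelingHom]

lemma mem_labelingPrime {f : MvPolynomial (V ⊕ V) K} :
    f ∈ labelingPrime K ℓ ↔ labelingHom K ℓ f = 0 :=
  Iff.rfl

lemma X_inl_mem_labelingPrime {v : V} : X (Sum.inl v) ∈ labelingPrime K ℓ ↔ ℓ v = none := by
  rw [mem_labelingPrime, labelingHom_inl]
  cases ℓ v <;> simp

lemma X_inr_mem_labelingPrime {v : V} : X (Sum.inr v) ∈ labelingPrime K ℓ ↔ ℓ v = none := by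
  rw [mem_labelingPrime, labelingHom_inr]
  cases ℓ v <;> simp

lemma edgeBinomial_mem_labelingPrime {i j : V} :
    edgeBinomial K i j ∈ labelingPrime K ℓ ↔ ∀ c ∈ ℓ i, ∀ d ∈ ℓ j, c = d := by
  rw [mem_labelingPrime, edgeBinomial]
  simp only [map_sub, map_mul, labelingHom_inl, labelingHom_inr]
  rcases ℓ i with _ | c <;> rcases ℓ j with _ | d
  case some.some =>
    have hfactor : (X (Sum.inl i) * (X (Sum.inl j) * X (Sum.inr d)) -
        X (Sum.inl j) * (X (Sum.inl i) * X (Sum.inr c)) : MvPolynomial (V ⊕ ι) K) =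
        X (Sum.inl i) * X (Sum.inl j) * (X (Sum.inr d) - X (Sum.inr c)) := by ring
    simp [hfactor, sub_eq_zero, X_injective.eq_iff, eq_comm (a := d)]
  all_goals simp

/-- The inverse substitution `t_c ↦ y_r / x_r`, for a representative `r` of the class `c`, makes
sense in the residue field of `P` and shows that `P` contains the kernel of `labelingHom`. -/
lemma labelingPrime_le {r : ι → V} (hr : ∀ c, ℓ (r c) = some c)
    {P : Ideal (MvPolynomial (V ⊕ V) K)} [P.IsPrime] (hP : P ≤ labelingPrime K ℓ)
    (hx : ∀ v, ℓ v = none → X (Sum.inl v) ∈ P) (hy : ∀ v, ℓ v = none → X (Sum.inr v) ∈ P)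
    (hf : ∀ v, ∀ c ∈ ℓ v, edgeBinomial K v (r c) ∈ P) :
    labelingPrime K ℓ ≤ P := by
  let π : MvPolynomial (V ⊕ V) K →ₐ[K] P.ResidueField :=
    IsScalarTower.toAlgHom K (MvPolynomial (V ⊕ V) K) P.ResidueField
  have hπ (f : MvPolynomial (V ⊕ V) K) : π f = 0 ↔ f ∈ P := Ideal.algebraMap_residueField_eq_zero
  let θ : MvPolynomial (V ⊕ ι) K →ₐ[K] P.ResidueField :=
    aeval (Sum.elim (fun v => π (X (Sum.inl v)))
      (fun c => π (X (Sum.inr (r c))) / π (X (Sum.inl (r c)))))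
  have hθ : θ.comp (labelingHom K ℓ) = π := by
    refine MvPolynomial.algHom_ext fun w => ?_
    rcases w with v | v <;> rcases hv : ℓ v with _ | c
    · simp [hv, (hπ _).mpr (hx v hv)]
    · simp [hv, θ]
    · simp [hv, (hπ _).mpr (hy v hv)]
    · have hrc : π (X (Sum.inl (r c))) ≠ 0 := fun h => by
        have := X_inl_mem_labelingPrime.mp (hP ((hπ _).mp h))
        simp [hr] at this
      have hvc : π (edgeBinomial K v (r c)) = 0 := (hπ _).mpr (hf v c hv)
      simp only [edgeBinomial, map_sub, map_mul] at hvc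
      simp only [AlgHom.comp_apply, labelingHom_inr, hv, Option.elim, map_mul, θ, aeval_X,
        Sum.elim_inl, Sum.elim_inr]
      rw [mul_div_assoc', div_eq_iff hrc]
      linear_combination hvc
  intro f hfm
  rw [← hπ, ← hθ, AlgHom.comp_apply, mem_labelingPrime.mp hfm, map_zero]

lemma labelingPrime_le_of_comp {ℓ' : V → Option κ}
    (θ : MvPolynomial (V ⊕ ι) K →ₐ[K] MvPolynomial (V ⊕ κ) K)
    (h : θ.comp (labelingHom K ℓ) = labelingHom K ℓ') :
    labelingPrime K ℓ ≤ labelingPrime K ℓ' := by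
  intro f hf
  rw [mem_labelingPrime, ← h, AlgHom.comp_apply, mem_labelingPrime.mp hf, map_zero]

lemma labelingPrime_lt_update_none [DecidableEq V] {s : V} (hs : ℓ s ≠ none) :
    labelingPrime K ℓ < labelingPrime K (Function.update ℓ s none) := by
  refine SetLike.lt_iff_le_and_exists.mpr ⟨labelingPrime_le_of_comp
    (aeval (Sum.elim (Function.update (fun v => X (Sum.inl v)) s 0) fun c => X (Sum.inr c))) ?_,
    X (Sum.inl s), by simp [X_inl_mem_labelingPrime], by simpa [X_inl_mem_labelingPrime]⟩
  refine MvPolynomial.algHom_ext fun w => ?_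
  rcases w with v | v <;> rcases eq_or_ne v s with rfl | hvs <;> rcases hv : ℓ v <;> simp [*]

lemma labelingPrime_lt_map {g : ι → κ} {i j : V} {c d : ι} (hi : ℓ i = some c)
    (hj : ℓ j = some d) (hcd : c ≠ d) (hg : g c = g d) :
    labelingPrime K ℓ < labelingPrime K (fun v => (ℓ v).map g) := by
  refine SetLike.lt_iff_le_and_exists.mpr ⟨labelingPrime_le_of_comp (rename (Sum.map id g)) ?_,
    edgeBinomial K i j, by simp [edgeBinomial_mem_labelingPrime, hi, hj, hg],
    by simp [edgeBinomial_mem_labelingPrime, hi, hj, hcd]⟩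
  refine MvPolynomial.algHom_ext fun w => ?_
  rcases w with v | v <;> rcases hv : ℓ v <;> simp [hv]

end LabelingPrime

section Height

variable {K : Type*} [Field K] {V ι : Type*} {ℓ : V → Option ι}

lemma labelingPrime_mem_minimalPrimes_span {r : ι → V} (hr : ∀ c, ℓ (r c) = some c) :
    labelingPrime K ℓ ∈ (Ideal.span ((fun v => X (Sum.inl v)) '' {v | ℓ v = none} ∪
      (fun v => (ℓ v).elim (X (Sum.inr v)) fun c => edgeBinomial K v (r c)) ''
        (Set.range r)ᶜ)).minimalPrimes := by
  refine ⟨⟨inferInstance, Ideal.span_le.mpr ?_⟩, ?_⟩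
  · rintro _ (⟨v, hv, rfl⟩ | ⟨v, -, rfl⟩)
    · exact X_inl_mem_labelingPrime.mpr hv
    · rcases hv : ℓ v with _ | c
      · simpa [hv] using X_inr_mem_labelingPrime.mpr hv
      · simp [hv, edgeBinomial_mem_labelingPrime, hr]
  · rintro P ⟨hP, hspan⟩ hle
    rw [Ideal.span_le, Set.union_subset_iff] at hspan
    refine labelingPrime_le hr hle (fun v hv => hspan.1 ⟨v, hv, rfl⟩) (fun v hv => ?_)
      fun v c hv => ?_
    · have hvr : v ∉ Set.range r := by
        rintro ⟨c, rfl⟩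
        simp [hr] at hv
      simpa [hv] using hspan.2 ⟨v, hvr, rfl⟩
    · by_cases hvr : v ∈ Set.range r
      · obtain ⟨d, rfl⟩ := hvr
        obtain rfl : d = c := by simpa [hr] using hv
        simp
      · simpa [Option.mem_def.mp hv] using hspan.2 ⟨v, hvr, rfl⟩

variable [Finite V]

lemma height_labelingPrime_add_le (hℓ : ∀ c, ∃ v, ℓ v = some c) :
    (labelingPrime K ℓ).height + Nat.card ι ≤ Nat.card V + {v | ℓ v = none}.ncard := by
  choose r hr using hℓ
  have hr_inj : Function.Injective r := fun c d hcd => by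
    simpa [hr] using congrArg ℓ hcd
  have hrange := Set.ncard_add_ncard_compl (Set.range r)
  rw [Set.ncard_range_of_injective hr_inj] at hrange
  have hheight := Ideal.height_le_card_of_mem_minimalPrimes_span
    ((Set.toFinite _).image _ |>.union ((Set.toFinite _).image _))
    (labelingPrime_mem_minimalPrimes_span (K := K) hr)
  calc (labelingPrime K ℓ).height + Nat.card ι
    _ ≤ ({v | ℓ v = none}.ncard + (Set.range r)ᶜ.ncard : ℕ) + Nat.card ι := by
        gcongr
        refine hheight.trans (Nat.cast_le.mpr ((Set.ncard_union_le _ _).trans ?_))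
        gcongr <;> exact Set.ncard_image_le
    _ = Nat.card V + {v | ℓ v = none}.ncard := by
        rw [← hrange]
        push_cast
        ring

lemma card_le_height_labelingPrime_add {π : V → ι} (hπ : Function.Surjective π) :
    Nat.card V ≤ (labelingPrime K fun v => some (π v)).height + Nat.card ι := by
  classical
  induction hk : Nat.card V - Nat.card ι generalizing ι with
  | zero =>
    have hcard : Nat.card V ≤ Nat.card ι := Nat.sub_eq_zero_iff_le.mp hk
    exact (Nat.cast_le.mpr hcard).trans le_add_self
  | succ k ih =>
    have : Finite ι := .of_surjective π hπ
    have hπ_inj : ¬ Function.Injective π := fun h => by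
      have := Nat.card_eq_of_bijective π ⟨h, hπ⟩
      omega
    obtain ⟨i, j, hij, hne⟩ := Function.not_injective_iff.mp hπ_inj
    let π' : V → Option ι := Function.update (fun v => some (π v)) i none
    have hπ'i : π' i = none := by simp [π']
    have hπ' {v : V} (hv : v ≠ i) : π' v = some (π v) := by simp [π', hv]
    have hπ'_surj : Function.Surjective π' := by
      rintro (_ | c)
      · exact ⟨i, hπ'i⟩
      · obtain ⟨v, rfl⟩ := hπ c
        rcases eq_or_ne v i with rfl | hv
        · exact ⟨j, by rw [hπ' hne.symm, hij]⟩
        · exact ⟨v, hπ' hv⟩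
    have hmerge : (fun v => (some (π' v)).map fun o => o.getD (π i)) = fun v => some (π v) := by
      funext v
      rcases eq_or_ne v i with rfl | hv
      · simp [hπ'i]
      · simp [hπ' hv]
    have hlt : labelingPrime K (fun v => some (π' v)) < labelingPrime K fun v => some (π v) := by
      rw [← hmerge]
      exact labelingPrime_lt_map (congrArg some hπ'i) (congrArg some (hπ' hne.symm))
        (Option.some_ne_none _).symm (by simp [hij])
    calc (Nat.card V : ℕ∞)
      _ ≤ (labelingPrime K fun v => some (π' v)).height + Nat.card (Option ι) :=
          ih hπ'_surj (by rw [Finite.card_option]; omega)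
      _ = (labelingPrime K fun v => some (π' v)).height + 1 + Nat.card ι := by
          rw [Finite.card_option, Nat.cast_succ, add_assoc, add_comm (1 : ℕ∞)]
      _ ≤ (labelingPrime K fun v => some (π v)).height + Nat.card ι := by
          gcongr
          exact Ideal.height_add_one_le_of_lt_of_isPrime hlt

lemma card_add_ncard_le_height_labelingPrime_add [Nonempty ι] (hℓ : ∀ c, ∃ v, ℓ v = some c) :
    (Nat.card V + {v | ℓ v = none}.ncard : ℕ∞) ≤ (labelingPrime K ℓ).height + Nat.card ι := by
  classical
  induction hk : {v | ℓ v = none}.ncard generalizing ℓ with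
  | zero =>
    have hsome (v : V) : ∃ c, some c = ℓ v := by
      have hv : v ∉ {v | ℓ v = none} := by simp [(Set.ncard_eq_zero).mp hk]
      obtain ⟨c, hc⟩ := Option.ne_none_iff_exists.mp hv
      exact ⟨c, hc⟩
    choose π hπ using hsome
    obtain rfl : (fun v => some (π v)) = ℓ := funext hπ
    have hπ_surj : Function.Surjective π := by simpa [Function.Surjective] using hℓ
    simpa using card_le_height_labelingPrime_add hπ_surj
  | succ k ih =>
    obtain ⟨s, hs : ℓ s = none⟩ := Set.nonempty_of_ncard_ne_zero (hk.trans_ne k.succ_ne_zero)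
    let ℓ' : V → Option ι := Function.update ℓ s (some (Classical.arbitrary ι))
    have hℓ' (c : ι) : ∃ v, ℓ' v = some c := by
      obtain ⟨v, hv⟩ := hℓ c
      have hvs : v ≠ s := by
        rintro rfl
        simp [hs] at hv
      exact ⟨v, by simp [ℓ', hvs, hv]⟩
    have hnone : {v | ℓ' v = none} = {v | ℓ v = none} \ {s} := by
      ext v
      rcases eq_or_ne v s with rfl | hv <;> simp [ℓ', *]
    have hlt : labelingPrime K ℓ' < labelingPrime K ℓ := by
      have := labelingPrime_lt_update_none (K := K) (ℓ := ℓ') (s := s) (by simp [ℓ'])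
      rwa [Function.update_idem, ← hs, Function.update_eq_self] at this
    have hk' : {v | ℓ' v = none}.ncard = k := by
      rw [hnone, Set.ncard_sdiff_singleton_of_mem (a := s) hs, hk, Nat.add_sub_cancel]
    calc (Nat.card V + (k + 1 : ℕ) : ℕ∞)
      _ = Nat.card V + k + 1 := by push_cast; ring
      _ ≤ (labelingPrime K ℓ').height + Nat.card ι + 1 := by gcongr ?_ + 1; exact ih hℓ' hk'
      _ = (labelingPrime K ℓ').height + 1 + Nat.card ι := by ring
      _ ≤ (labelingPrime K ℓ).height + Nat.card ι := by
          gcongr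
          exact Ideal.height_add_one_le_of_lt_of_isPrime hlt

lemma height_labelingPrime_add [Nonempty ι] (hℓ : ∀ c, ∃ v, ℓ v = some c) :
    (labelingPrime K ℓ).height + Nat.card ι = Nat.card V + {v | ℓ v = none}.ncard :=
  (height_labelingPrime_add_le hℓ).antisymm (card_add_ncard_le_height_labelingPrime_add hℓ)

end Height

section ComponentPrime

variable {V : Type*} (G : SimpleGraph V) (S : Set V)

open Classical in
/-- The labeling of the vertices outside `S` by their connected components in `G - S`; the
vertices of `S` are unlabeled. -/
def componentLabel (v : V) : Option (G.induce Sᶜ).ConnectedComponent :=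
  if h : v ∈ S then none else some ((G.induce Sᶜ).connectedComponentMk ⟨v, h⟩)

/-- The prime `P_S(G)`, generated by the variables of the vertices in `S` and by the binomial edge
ideals of the complete graphs on the connected components of `G - S`. -/
def componentPrime (K : Type*) [Field K] : Ideal (MvPolynomial (V ⊕ V) K) :=
  labelingPrime K (componentLabel G S)

instance componentPrime_isPrime (K : Type*) [Field K] : (componentPrime G S K).IsPrime :=
  labelingPrime_isPrime K _

/-- Every vertex of `S` is a cut point of `G - (S \ {s})`: it is adjacent to two different
connected components of `G - S`. For connected `G` these `S` index the minimal primes of `J_G`. -/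
def HasCutPointProperty : Prop :=
  ∀ s ∈ S, ∃ i j : (Sᶜ : Set V), G.Adj s i ∧ G.Adj s j ∧ ¬ (G.induce Sᶜ).Reachable i j

variable {G S}

lemma componentLabel_eq_none {v : V} : componentLabel G S v = none ↔ v ∈ S := by
  simp [componentLabel]

lemma componentLabel_coe (v : (Sᶜ : Set V)) :
    componentLabel G S v = some ((G.induce Sᶜ).connectedComponentMk v) :=
  dif_neg v.2

lemma binomialEdgeIdeal_le_componentPrime (K : Type*) [Field K] :
    binomialEdgeIdeal K G ≤ componentPrime G S K := by
  refine binomialEdgeIdeal_le_iff.mpr fun i j hij => edgeBinomial_mem_labelingPrime.mpr ?_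
  by_cases hi : i ∈ S
  · simp [componentLabel_eq_none.mpr hi]
  by_cases hj : j ∈ S
  · simp [componentLabel_eq_none.mpr hj]
  have hij' : (G.induce Sᶜ).Adj ⟨i, hi⟩ ⟨j, hj⟩ := hij
  simpa [componentLabel, hi, hj] using hij'.reachable

lemma componentPrime_mem_minimalPrimes (hS : HasCutPointProperty G S) (K : Type*) [Field K] :
    componentPrime G S K ∈ (binomialEdgeIdeal K G).minimalPrimes := by
  refine ⟨⟨inferInstance, binomialEdgeIdeal_le_componentPrime K⟩, ?_⟩
  rintro P ⟨hP, hGP⟩ hle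
  have hedge (i j : V) (hij : G.Adj i j) : edgeBinomial K i j ∈ P :=
    binomialEdgeIdeal_le_iff.mp hGP i j hij
  have hvars (s : V) (hs : componentLabel G S s = none) :
      X (Sum.inl s) ∈ P ∧ X (Sum.inr s) ∈ P := by
    obtain ⟨i, j, hi, hj, hij⟩ := hS s (componentLabel_eq_none.mp hs)
    refine X_mem_of_edgeBinomial_notMem (hedge s i hi) (hedge s j hj) fun h => hij ?_
    simpa [edgeBinomial_mem_labelingPrime, componentLabel_coe] using
      edgeBinomial_mem_labelingPrime.mp (hle h)
  have hnotMem (v : V) (hv : v ∈ Sᶜ) : X (Sum.inl v) ∉ P := fun h =>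
    hv (componentLabel_eq_none.mp (X_inl_mem_labelingPrime.mp (hle h)))
  refine labelingPrime_le (r := fun c => (c.out : V)) (fun c => ?_) hle
    (fun v hv => (hvars v hv).1) (fun v hv => (hvars v hv).2) fun v c hv => ?_
  · rw [componentLabel_coe]
    exact congrArg some c.out_eq
  · have hvS : v ∉ S := fun h => by simp [componentLabel_eq_none.mpr h] at hv
    refine edgeBinomial_mem_of_reachable_induce hGP hnotMem (a := ⟨v, hvS⟩) (b := c.out) ?_
    have hc : (G.induce Sᶜ).connectedComponentMk ⟨v, hvS⟩ = c := by
      simpa [componentLabel, hvS] using hv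
    exact SimpleGraph.ConnectedComponent.exact (hc.trans c.out_eq.symm)

lemma height_componentPrime_add [Finite V] (hS : Sᶜ.Nonempty) (K : Type*) [Field K] :
    (componentPrime G S K).height + Nat.card (G.induce Sᶜ).ConnectedComponent =
      Nat.card V + S.ncard := by
  have : Nonempty (G.induce Sᶜ).ConnectedComponent :=
    hS.to_subtype.map (G.induce Sᶜ).connectedComponentMk
  have hunlabeled : {v | componentLabel G S v = none} = S := Set.ext fun v => componentLabel_eq_none
  rw [componentPrime, height_labelingPrime_add, hunlabeled]
  exact fun c => ⟨c.out, (componentLabel_coe _).trans (congrArg some c.out_eq)⟩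

end ComponentPrime

section Unmixed

lemma htI_eq_height {R : Type*} [CommRing R] (P : Ideal R) [hP : P.IsPrime] :
    htI P = P.height := by
  rw [show P.height = _ from PrimeSpectrum.height_eq_orderHeight ⟨P, hP⟩]
  exact le_antisymm (iInf₂_le (⟨P, hP⟩ : PrimeSpectrum R) le_rfl)
    (le_iInf₂ fun Q hQ => Order.height_mono hQ)

lemma IsUnmixed.height_eq {R : Type*} [CommRing R] {I : Ideal R} (hI : IsUnmixed I)
    {P Q : Ideal R} (hP : P ∈ I.minimalPrimes) (hQ : Q ∈ I.minimalPrimes) :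
    P.height = Q.height := by
  have := hP.1.1
  have := hQ.1.1
  rw [← htI_eq_height, ← htI_eq_height, hI P hP, hI Q hQ]

lemma card_connectedComponent_induce_compl_of_isUnmixed {K : Type*} [Field K] {V : Type*} [Finite V]
    {G : SimpleGraph V} (hG : G.Connected) (hunm : IsUnmixed (binomialEdgeIdeal K G)) {S : Set V}
    (hS : HasCutPointProperty G S) (hne : Sᶜ.Nonempty) :
    Nat.card (G.induce Sᶜ).ConnectedComponent = S.ncard + 1 := by
  have hV : Nonempty V := hG.nonempty
  have hempty : Nat.card (G.induce (∅ : Set V)ᶜ).ConnectedComponent = 1 := by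
    have hconn : (G.induce (∅ : Set V)ᶜ).Connected := by
      rw [Set.compl_empty]
      exact (SimpleGraph.induceUnivIso G).connected_iff.mpr hG
    have := hconn.preconnected.subsingleton_connectedComponent
    have := hconn.nonempty.map (G.induce (∅ : Set V)ᶜ).connectedComponentMk
    exact Nat.card_unique
  have hheight : (componentPrime G S K).height = (componentPrime G ∅ K).height :=
    hunm.height_eq (componentPrime_mem_minimalPrimes hS K)
      (componentPrime_mem_minimalPrimes (by simp [HasCutPointProperty]) K)
  have hheightS := height_componentPrime_add (G := G) hne K
  have hheight0 := height_componentPrime_add (G := G) (S := ∅) (by simp) K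
  rw [hempty, Set.ncard_empty] at hheight0
  rw [hheight] at hheightS
  have hfinite : (componentPrime G ∅ K).height ≠ ⊤ := fun h => by
    rw [h, top_add] at hheight0
    exact ENat.natCast_ne_top (Nat.card V + 0) (by exact_mod_cast hheight0.symm)
  lift (componentPrime G ∅ K).height to ℕ using hfinite with h
  norm_cast at hheightS hheight0
  omega

end Unmixed

section Forest

open SimpleGraph

variable {V : Type*} {G : SimpleGraph V}

lemma image_edgeSet_induce_compl (S : Set V) :
    Sym2.map (↑) '' (G.induce Sᶜ).edgeSet = G.edgeSet \ ⋃ v ∈ S, G.incidenceSet v := by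
  refine Set.Subset.antisymm ?_ ?_
  · rintro _ ⟨⟨a, b⟩, hab, rfl⟩
    refine ⟨hab, fun hmem => ?_⟩
    obtain ⟨v, hvS, -, hv⟩ := Set.mem_iUnion₂.mp hmem
    rcases Sym2.mem_iff.mp hv with rfl | rfl
    · exact a.2 hvS
    · exact b.2 hvS
  · rintro ⟨a, b⟩ ⟨hab, hmem⟩
    have hnotMem (v : V) (hv : v ∈ s(a, b)) : v ∈ Sᶜ := fun hvS =>
      hmem (Set.mem_iUnion₂.mpr ⟨v, hvS, hab, hv⟩)
    exact ⟨s(⟨a, hnotMem a (by simp)⟩, ⟨b, hnotMem b (by simp)⟩), hab, rfl⟩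

variable [Finite V]

lemma card_connectedComponent_deleteEdges_of_isBridge {a b : V} (hbridge : G.IsBridge s(a, b))
    (hab : G.Adj a b) :
    Nat.card (G.deleteEdges {s(a, b)}).ConnectedComponent =
      Nat.card G.ConnectedComponent + 1 := by
  classical
  let H := G.deleteEdges {s(a, b)}
  have hne : H.connectedComponentMk a ≠ H.connectedComponentMk b :=
    fun h => hbridge (ConnectedComponent.exact h)
  let split (v : V) : H.ConnectedComponent :=
    if H.Reachable v b then H.connectedComponentMk a else H.connectedComponentMk v
  have hsplit_adj {v w : V} (hvw : G.Adj v w) : split v = split w := by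
    by_cases he : s(v, w) = s(a, b)
    · rcases Sym2.eq_iff.mp he with ⟨rfl, rfl⟩ | ⟨rfl, rfl⟩ <;> simp [split]
    · have hH : H.Reachable v w := Adj.reachable (by simpa [H, he] using hvw)
      have hiff : H.Reachable v b ↔ H.Reachable w b := ⟨hH.symm.trans, hH.trans⟩
      simp only [split, hiff, ConnectedComponent.sound hH]
  let f : G.ConnectedComponent → H.ConnectedComponent :=
    ConnectedComponent.lift split fun v w p hp => by
      induction p with
      | nil => rfl
      | cons h _ ih => exact (hsplit_adj h).trans (ih hp.of_cons)
  let merge : H.ConnectedComponent → G.ConnectedComponent :=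
    ConnectedComponent.map (Hom.ofLE (G.deleteEdges_le _))
  have hmerge : Function.LeftInverse merge f := by
    refine ConnectedComponent.ind fun v => ?_
    by_cases hv : H.Reachable v b
    · simpa [f, split, merge, hv] using hab.reachable.trans (hv.mono (G.deleteEdges_le _)).symm
    · simp [f, split, merge, hv]
  have hrange : Set.range f = {H.connectedComponentMk b}ᶜ := by
    refine Set.Subset.antisymm ?_ ?_
    · rintro _ ⟨c, rfl⟩
      induction c using ConnectedComponent.ind with
      | h v => by_cases hv : H.Reachable v b <;> simp [f, split, hv, hne]
    · refine ConnectedComponent.ind fun v hv => ⟨G.connectedComponentMk v, ?_⟩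
      have hv' : ¬ H.Reachable v b := fun h => hv (ConnectedComponent.sound h)
      simp [f, split, hv']
  have hcard := Set.ncard_add_ncard_compl {H.connectedComponentMk b}
  rw [← hrange, Set.ncard_range_of_injective hmerge.injective, Set.ncard_singleton] at hcard
  rw [← hcard, add_comm]

lemma card_connectedComponent_add_ncard_edgeSet_of_isAcyclic (hG : G.IsAcyclic) :
    Nat.card G.ConnectedComponent + G.edgeSet.ncard = Nat.card V := by
  induction hk : G.edgeSet.ncard generalizing G with
  | zero =>
    obtain rfl : G = ⊥ := edgeSet_eq_empty.mp ((Set.ncard_eq_zero).mp hk)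
    refine (Nat.card_eq_of_bijective (⊥ : SimpleGraph V).connectedComponentMk ⟨?_, ?_⟩).symm
    · exact fun v w h => reachable_bot.mp (ConnectedComponent.exact h)
    · exact Quot.mk_surjective
  | succ k ih =>
    obtain ⟨e, he⟩ := Set.nonempty_of_ncard_ne_zero (hk.trans_ne k.succ_ne_zero)
    induction e with
    | h a b =>
      have hcomp := card_connectedComponent_deleteEdges_of_isBridge
        (isAcyclic_iff_forall_isBridge.mp hG he) he
      have hedges : (G.deleteEdges {s(a, b)}).edgeSet.ncard = k := by
        rw [edgeSet_deleteEdges, Set.ncard_sdiff_singleton_of_mem he, hk, Nat.add_sub_cancel]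
      have := ih (hG.anti (G.deleteEdges_le _)) hedges
      omega

lemma ncard_edgeSet_induce_compl_pair [G.LocallyFinite] {u v : V} (huv : u ≠ v)
    (hadj : ¬ G.Adj u v) :
    (G.induce {u, v}ᶜ).edgeSet.ncard + (G.degree u + G.degree v) = G.edgeSet.ncard := by
  classical
  have hinc (w : V) : (G.incidenceSet w).ncard = G.degree w := by
    rw [← card_incidenceSet_eq_degree, ← Nat.card_eq_fintype_card, Nat.card_coe_set_eq]
  have hdisj : Disjoint (G.incidenceSet u) (G.incidenceSet v) :=
    Set.disjoint_iff_inter_eq_empty.mpr (G.incidenceSet_inter_incidenceSet_of_not_adj hadj huv)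
  have hsub : G.incidenceSet u ∪ G.incidenceSet v ⊆ G.edgeSet :=
    Set.union_subset (G.incidenceSet_subset u) (G.incidenceSet_subset v)
  rw [← Set.ncard_image_of_injective _ (Sym2.map.injective Subtype.val_injective),
    image_edgeSet_induce_compl, Set.biUnion_pair, ← hinc, ← hinc, ← Set.ncard_union_eq hdisj,
    Set.ncard_sdiff_add_ncard_of_subset hsub]

end Forest

section Unicyclic

open SimpleGraph

variable {V : Type*} {G : SimpleGraph V}

lemma not_reachable_of_isAcyclic {W : Type*} {F : SimpleGraph W} (hF : F.IsAcyclic)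
    {H : SimpleGraph V} (f : H →g F) {u : W} (hu : u ∉ Set.range f) {a b : V}
    (ha : F.Adj u (f a)) (hb : F.Adj u (f b)) (hab : f a ≠ f b) : ¬ H.Reachable a b := by
  intro hreach
  have hbridge : ¬ (F.deleteEdges {s(u, f a)}).Reachable u (f a) :=
    isAcyclic_iff_forall_adj_isBridge.mp hF ha
  let f' : H →g F.deleteEdges {s(u, f a)} :=
    ⟨f, fun {v w} hvw => deleteEdges_adj.mpr ⟨f.map_adj hvw, fun he => by
      rcases Sym2.mem_iff.mp (he ▸ Sym2.mem_mk_left u (f a)) with h | h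
      exacts [hu ⟨v, h.symm⟩, hu ⟨w, h.symm⟩]⟩⟩
  have hub : (F.deleteEdges {s(u, f a)}).Adj u (f b) :=
    deleteEdges_adj.mpr ⟨hb, fun he => hab (Sym2.congr_right.mp he).symm⟩
  exact hbridge (hub.reachable.trans (hreach.symm.map f'))

lemma hasCutPointProperty_of_isAcyclic [G.LocallyFinite] {S : Set V} (hindep : G.IsIndepSet S)
    (hacyc : ∀ s ∈ S, (G.induce (S \ {s})ᶜ).IsAcyclic) (hdeg : ∀ s ∈ S, 2 ≤ G.degree s) :
    HasCutPointProperty G S := by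
  intro s hs
  obtain ⟨a, ha, b, hb, hab⟩ := Finset.one_lt_card.mp (hdeg s hs)
  rw [mem_neighborFinset] at ha hb
  have hnotMem {v : V} (hv : G.Adj s v) : v ∈ Sᶜ := fun hvS => hindep hs hvS hv.ne hv
  let f : G.induce Sᶜ →g G.induce (S \ {s})ᶜ :=
    (induceHomOfLE G (Set.compl_subset_compl.mpr Set.sdiff_subset)).toHom
  refine ⟨⟨a, hnotMem ha⟩, ⟨b, hnotMem hb⟩, ha, hb,
    not_reachable_of_isAcyclic (hacyc s hs) f (u := ⟨s, by simp⟩) ?_ ha hb ?_⟩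
  · rintro ⟨v, hv⟩
    exact v.2 (congrArg Subtype.val hv ▸ hs)
  · exact fun h => hab (congrArg Subtype.val h)

variable [Finite V]

lemma degree_add_degree_eq_five_of_isUnmixed {K : Type*} [Field K] [G.LocallyFinite]
    (hG : G.Connected) (hcard : G.edgeSet.ncard = Nat.card V)
    (hunm : IsUnmixed (binomialEdgeIdeal K G)) {u v : V} (huv : u ≠ v) (hadj : ¬ G.Adj u v)
    (hu : (G.induce {u}ᶜ).IsAcyclic) (hv : (G.induce {v}ᶜ).IsAcyclic)
    (hdu : 2 ≤ G.degree u) (hdv : 2 ≤ G.degree v) :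
    G.degree u + G.degree v = 5 := by
  have hcut : HasCutPointProperty G {u, v} := by
    refine hasCutPointProperty_of_isAcyclic ?_ ?_ (by simp [hdu, hdv])
    · simp [IsIndepSet, Set.pairwise_pair, hadj, G.adj_comm v u]
    · rintro s (rfl | rfl)
      · rwa [Set.pair_sdiff_left huv]
      · rwa [Set.pair_sdiff_right huv]
  have hne : ({u, v}ᶜ : Set V).Nonempty := by
    obtain ⟨a, -⟩ := hcut u (by simp)
    exact ⟨a, a.2⟩
  have hsub : ({u, v}ᶜ : Set V) ⊆ {u}ᶜ := by simp
  have hforest : (G.induce {u, v}ᶜ).IsAcyclic :=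
    hu.comap (induceHomOfLE G hsub).toHom (induceHomOfLE G hsub).injective
  have hcomp : Nat.card (G.induce {u, v}ᶜ).ConnectedComponent = 3 := by
    rw [card_connectedComponent_induce_compl_of_isUnmixed hG hunm hcut hne, Set.ncard_pair huv]
  have heuler := card_connectedComponent_add_ncard_edgeSet_of_isAcyclic hforest
  have hedges := ncard_edgeSet_induce_compl_pair huv hadj
  have hverts := Set.ncard_add_ncard_compl {u, v}
  rw [Set.ncard_pair huv] at hverts
  rw [hcomp, Nat.card_coe_set_eq] at heuler
  omega

lemma isAcyclic_deleteEdges_of_not_isBridge (hG : G.Connected)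
    (hcard : G.edgeSet.ncard = Nat.card V) {u v : V} (huv : G.Adj u v)
    (hbridge : ¬ G.IsBridge s(u, v)) : (G.deleteEdges {s(u, v)}).IsAcyclic := by
  refine (isTree_iff_connected_and_card.mpr
    ⟨hG.connected_delete_edge_of_not_isBridge hbridge, ?_⟩).isAcyclic
  have hmem : s(u, v) ∈ G.edgeSet := huv
  rw [Nat.card_coe_set_eq, edgeSet_deleteEdges, Set.ncard_sdiff_singleton_add_one hmem, hcard]

lemma isAcyclic_induce_compl_singleton_of_not_isBridge (hG : G.Connected)
    (hcard : G.edgeSet.ncard = Nat.card V) {u v : V} (huv : G.Adj u v)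
    (hbridge : ¬ G.IsBridge s(u, v)) : (G.induce {u}ᶜ).IsAcyclic := by
  refine (isAcyclic_deleteEdges_of_not_isBridge hG hcard huv hbridge).comap
    ⟨Subtype.val, fun {a b} hab => deleteEdges_adj.mpr ⟨hab, fun he => ?_⟩⟩ Subtype.val_injective
  rcases Sym2.mem_iff.mp (he ▸ Sym2.mem_mk_left u v) with h | h
  exacts [a.2 h.symm, b.2 h.symm]

end Unicyclic

section Cycle

open SimpleGraph

variable {V : Type*}

lemma reachable_of_forall_adj_succ {G : SimpleGraph V} {w : ℕ → V} {a b : ℕ} (hab : a ≤ b)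
    (hadj : ∀ k, a ≤ k → k < b → G.Adj (w k) (w (k + 1))) : G.Reachable (w a) (w b) := by
  induction b, hab using Nat.le_induction with
  | base => rfl
  | succ b hab ih =>
    exact (ih fun k hak hkb => hadj k hak (by omega)).trans (hadj b hab (by omega)).reachable

/-- `w 0, …, w (l - 1)` runs once around a cycle of length `l` of `G`, not necessarily induced, and
`w` continues periodically. -/
structure IsCyclicSequence (G : SimpleGraph V) (l : ℕ) (w : ℕ → V) : Prop where
  adj (k : ℕ) : G.Adj (w k) (w (k + 1))
  periodic (k : ℕ) : w (k + l) = w k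
  ne {a b : ℕ} (hab : a < b) (hba : b < a + l) : w a ≠ w b

lemma IsCycleGraphOfLength.exists_isCyclicSequence {G : SimpleGraph V} {C : G.Subgraph} {l : ℕ}
    (hC : IsCycleGraphOfLength C.coe l) (hl : 0 < l) : ∃ w, IsCyclicSequence G l w := by
  obtain ⟨e, he⟩ := hC
  have hmod {a b : ℕ} (hab : a < b) (hba : b < a + l) : a % l ≠ b % l := fun h => by
    have := Nat.le_of_dvd (by omega) ((Nat.modEq_iff_dvd' hab.le).mp h)
    omega
  refine ⟨fun k => e.symm ⟨k % l, Nat.mod_lt k hl⟩, fun k => C.adj_sub ?_, fun k => ?_,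
    fun hab hba h => ?_⟩
  · exact (he _ _).mpr (Or.inl (by simp))
  · simp
  · exact hmod hab hba (by simpa using Subtype.val_injective h)

namespace IsCyclicSequence

variable {G : SimpleGraph V} {l : ℕ} {w : ℕ → V}

lemma edge_ne (hw : IsCyclicSequence G l w) (hl : 3 ≤ l) {j k : ℕ} (hjk : j < k)
    (hkj : k < j + l) : s(w k, w (k + 1)) ≠ s(w j, w (j + 1)) := by
  rw [Ne, Sym2.eq_iff]
  rintro (⟨h, -⟩ | ⟨h₁, h₂⟩)
  · exact hw.ne hjk hkj h.symm
  · rcases Nat.lt_or_ge (k + 1) (j + l) with hlt | hge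
    · exact hw.ne (by omega) hlt h₂.symm
    · exact hw.ne (by omega) (by omega) h₁.symm

lemma not_isBridge (hw : IsCyclicSequence G l w) (hl : 3 ≤ l) (k : ℕ) :
    ¬ G.IsBridge s(w k, w (k + 1)) := by
  rw [isBridge_iff, not_not]
  have harc : (G.deleteEdges {s(w k, w (k + 1))}).Reachable (w (k + 1)) (w (k + l)) :=
    reachable_of_forall_adj_succ (by omega) fun j hkj hjk =>
      deleteEdges_adj.mpr ⟨hw.adj j, hw.edge_ne hl (by omega) (by omega)⟩
  rw [hw.periodic] at harc
  exact harc.symm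

lemma not_adj_of_isAcyclic (hw : IsCyclicSequence G l w) {a b : ℕ} (hab : a + 2 ≤ b)
    (hba : b + 2 ≤ a + l) (hacyc : (G.deleteEdges {s(w b, w (b + 1))}).IsAcyclic) :
    ¬ G.Adj (w a) (w b) := by
  intro hchord
  have hchord' : (G.deleteEdges {s(w b, w (b + 1))}).Adj (w a) (w b) := by
    refine deleteEdges_adj.mpr ⟨hchord, fun he => ?_⟩
    rw [Set.mem_singleton_iff, Sym2.eq_swap] at he
    exact hw.ne (by omega) (by omega) (Sym2.congr_right.mp he)
  refine isAcyclic_iff_forall_adj_isBridge.mp hacyc hchord' ?_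
  refine reachable_of_forall_adj_succ (by omega) fun k hak hkb => ?_
  refine deleteEdges_adj.mpr ⟨deleteEdges_adj.mpr ⟨hw.adj k, ?_⟩, ?_⟩
  · exact (hw.edge_ne (by omega) hkb (by omega)).symm
  · rw [Set.mem_singleton_iff, Sym2.eq_iff]
    rintro (⟨hka, hkb'⟩ | ⟨h, -⟩)
    · rcases hak.eq_or_lt with rfl | hlt
      · exact hw.ne (by omega) (by omega) hkb'
      · exact hw.ne hlt (by omega) hka.symm
    · exact hw.ne hkb (by omega) h

lemma two_le_degree [G.LocallyFinite] (hw : IsCyclicSequence G l w) (hl : 3 ≤ l) (k : ℕ) :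
    2 ≤ G.degree (w k) := by
  obtain ⟨m, rfl⟩ := Nat.exists_eq_add_of_le' (show 1 ≤ l by omega)
  have hprev : G.Adj (w k) (w (k + m)) := by
    have := hw.adj (k + m)
    rw [add_assoc, hw.periodic] at this
    exact this.symm
  refine Finset.one_lt_card.mpr ⟨w (k + 1), ?_, w (k + m), ?_, hw.ne (by omega) (by omega)⟩
  · exact (mem_neighborFinset _ _ _).mpr (hw.adj k)
  · exact (mem_neighborFinset _ _ _).mpr hprev

end IsCyclicSequence

end Cycle

theorem binomialEdgeIdeal_not_unmixed_of_long_cycle_general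
    (K : Type*) [Field K] {V : Type*} [Finite V] (G : SimpleGraph V) (hConn : G.Connected)
    (hUni : G.edgeSet.ncard = Nat.card V) (l : ℕ) (hl : 5 ≤ l) (C : G.Subgraph)
    (hC : IsCycleGraphOfLength C.coe l) : ¬ IsUnmixed (binomialEdgeIdeal K G) := by
  classical
  intro hunm
  have := Fintype.ofFinite V
  obtain ⟨w, hw⟩ := hC.exists_isCyclicSequence (by omega)
  have hbridge (k : ℕ) : ¬ G.IsBridge s(w k, w (k + 1)) := hw.not_isBridge (by omega) k
  have hforest (k : ℕ) : (G.induce {w k}ᶜ).IsAcyclic :=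
    isAcyclic_induce_compl_singleton_of_not_isBridge hConn hUni (hw.adj k) (hbridge k)
  have hsum (a b : ℕ) (hab : a + 2 ≤ b) (hba : b + 2 ≤ a + l) :
      G.degree (w a) + G.degree (w b) = 5 := by
    have hnadj : ¬ G.Adj (w a) (w b) := hw.not_adj_of_isAcyclic hab hba
      (isAcyclic_deleteEdges_of_not_isBridge hConn hUni (hw.adj b) (hbridge b))
    exact degree_add_degree_eq_five_of_isUnmixed hConn hUni hunm (hw.ne (by omega) (by omega))
      hnadj (hforest a) (hforest b) (hw.two_le_degree (by omega) a) (hw.two_le_degree (by omega) b)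
  have h02 := hsum 0 2 (by omega) (by omega)
  have h24 := hsum 2 4 (by omega) (by omega)
  have h14 := hsum 1 4 (by omega) (by omega)
  have h13 := hsum 1 3 (by omega) (by omega)
  have h03 := hsum 0 3 (by omega) (by omega)
  omega

/-- Let `G` be a connected unicyclic graph of the form
`G = C_l ∪ (P_1 ∪ ⋯ ∪ P_r)` with `l ≥ 5`, where `C_l` is a cycle of length `l`,
each `P_i` is a path graph meeting `C_l` in exactly one vertex, and the `P_i` are
pairwise vertex-disjoint. Then `J_G` is not unmixed. -/
theorem binomialEdgeIdeal_not_unmixed_of_long_cycle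
    (K : Type*) [Field K] (n : ℕ) (G : SimpleGraph (Fin n))
    (hConn : G.Connected) (hUni : G.edgeSet.ncard = n)
    (l r : ℕ) (hl : 5 ≤ l) (hr : r ≤ l) (C : G.Subgraph) (P : Fin r → G.Subgraph)
    (hC : IsCycleGraphOfLength C.coe l)
    (hP : ∀ i, IsPathGraph (P i).coe)
    (hPC : ∀ i, ((P i).verts ∩ C.verts).ncard = 1)
    (hPP : ∀ i j, i ≠ j → (P i).verts ∩ (P j).verts = ∅)
    (hcover : C ⊔ (⨆ i, P i) = ⊤) :
    ¬ IsUnmixed (binomialEdgeIdeal K G) := by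
  exact binomialEdgeIdeal_not_unmixed_of_long_cycle_general K G hConn (by simpa using hUni) l hl
    C hC

end
end

section
/- For every T ⊆ [n], the height of P_T(G) equals n + |T| − c(T), where c(T) is the number of connected components of the induced subgraph of G on [n]∖T. -/
open MvPolynomial

noncomputable section

/-- The prime `P_T(G)` associated with a subset `T` of the vertices: it is generated
by the variables `x_i, y_i` for `i ∈ T` together with the binomial edge ideals of the
complete graphs on the connected components of the subgraph of `G` induced on the
complement of `T` (i.e. all `2`-minors `x_i y_j - x_j y_i` for distinct vertices
`i, j ∉ T` lying in the same connected component of that induced subgraph). -/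
def PTIdeal (K : Type*) [Field K] {n : ℕ} (G : SimpleGraph (Fin n)) (T : Set (Fin n)) :
    Ideal (MvPolynomial (Fin n ⊕ Fin n) K) :=
  Ideal.span
    ({ f | ∃ i ∈ T, f = X (Sum.inl i) } ∪ { f | ∃ i ∈ T, f = X (Sum.inr i) } ∪
      { f | ∃ (i j : Fin n) (hi : i ∈ Tᶜ) (hj : j ∈ Tᶜ), i ≠ j ∧
        (G.induce Tᶜ).Reachable ⟨i, hi⟩ ⟨j, hj⟩ ∧
        f = X (Sum.inl i) * X (Sum.inr j) - X (Sum.inl j) * X (Sum.inr i) })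

/-- The number of connected components of the subgraph of `G` induced on `U`. -/
def cNum {n : ℕ} (G : SimpleGraph (Fin n)) (U : Set (Fin n)) : ℕ :=
  Nat.card (G.induce U).ConnectedComponent

/-- `T` has the cutpoint property for `G`: every `i ∈ T` is a cutpoint of the
subgraph of `G` induced on `([n] ∖ T) ∪ {i}`, i.e. removing `i` from that graph
increases the number of connected components. -/
def HasCutpointProperty {n : ℕ} (G : SimpleGraph (Fin n)) (T : Set (Fin n)) : Prop :=
  ∀ i ∈ T, cNum G (Tᶜ ∪ {i}) < cNum G Tᶜ

/-!
Up to radical, `P_T(G)` is the kernel of the parametrization `x_i ↦ a_i`, `y_i ↦ a_i z_c` for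
`i ∉ T` in the component `c`, and `x_i, y_i ↦ 0` for `i ∈ T`. A prime containing `P_T(G)` is a point
over its residue field whose columns `(x_i, y_i)`, for `i` in a component, are multiples of one
vector `(p_c, q_c)`; such a point is a specialization of the parametrization, the case `p_c = 0`
being reached through the homogeneous parametrization `(a_i p_c, a_i q_c)`.

The `a_i = x_i` and the `z_c = y_i / x_i` are algebraic over the image of the parametrization, so
the kernel has height `2n - (n - |T|) - c(T)`, the number of variables minus the transcendence
degree. To see the latter, single out variables mapping to a transcendence basis: over the fraction
field of the polynomial ring in these, the kernel becomes a maximal ideal in the remaining ones.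
-/

theorem mvPolynomial_height_eq_card_of_isMaximal {K σ : Type*} [Field K] [Finite σ]
    (M : Ideal (MvPolynomial σ K)) [M.IsMaximal] : M.height = Nat.card σ := by
  induction σ using Finite.induction_empty_option with
  | of_equiv e ih =>
    have := ih (M.comap (renameEquiv K e).toRingEquiv)
    rwa [RingEquiv.height_comap, Nat.card_congr e] at this
  | h_empty =>
    have : M.comap (isEmptyRingEquiv K PEmpty).symm = ⊥ := Ideal.eq_bot_of_prime _
    rw [← (isEmptyRingEquiv K PEmpty).symm.height_comap, this]
    simp
  | @h_option τ _ ih =>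
    let M' := M.comap (optionEquivLeft K τ).symm.toRingEquiv
    have : M'.IsMaximal := Ideal.comap_isMaximal_of_equiv _
    have : (M'.comap Polynomial.C).IsMaximal :=
      Polynomial.isMaximal_comap_C_of_isJacobsonRing M'
    have : M'.LiesOver (M'.comap Polynomial.C) := ⟨rfl⟩
    calc M.height = M'.height := (RingEquiv.height_comap _ _).symm
      _ = (M'.comap Polynomial.C).height + 1 := Polynomial.height_eq_height_add_one _ _
      _ = Nat.card (Option τ) := by rw [ih, Finite.card_option, Nat.cast_succ]

theorem isMaximal_ker_aeval {K L σ : Type*} [Field K] [Field L] [Algebra K L]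
    [Algebra.IsAlgebraic K L] (v : σ → L) :
    (RingHom.ker (aeval v : MvPolynomial σ K →ₐ[K] L)).IsMaximal := by
  have h : (aeval v : MvPolynomial σ K →ₐ[K] L).toRingHom.IsIntegral :=
    RingHom.IsIntegral.tower_top (algebraMap K _) _ <| by
      rw [AlgHom.toRingHom_eq_coe, AlgHom.comp_algebraMap]
      exact algebraMap_isIntegral_iff.2 inferInstance
  exact Ideal.isMaximal_comap_of_isIntegral_of_isMaximal' _ h ⊥

theorem height_ker_aeval_of_isAlgebraic {R F σ : Type*} [CommRing R] [CommRing F]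
    [IsDomain F] [Algebra R F] [FaithfulSMul R F] [Algebra.IsAlgebraic R F] [Finite σ]
    (v : σ → F) :
    (RingHom.ker (aeval v : MvPolynomial σ R →ₐ[R] F)).height = Nat.card σ := by
  have : IsDomain R := (FaithfulSMul.algebraMap_injective R F).isDomain
  let K := FractionRing R
  let L := FractionRing F
  let _ : Algebra K L := FractionRing.liftAlgebra R L
  have := FractionRing.isScalarTower_liftAlgebra R L
  have := (IsFractionRing.isAlgebraic_iff' R F L).1 inferInstance
  have : Algebra.IsAlgebraic K L := (IsFractionRing.comap_isAlgebraic_iff (A := R)).1 this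
  let _ : Algebra (MvPolynomial σ R) (MvPolynomial σ K) := algebraMvPolynomial
  let M := RingHom.ker (aeval (algebraMap F L ∘ v) : MvPolynomial σ K →ₐ[K] L)
  have : M.IsMaximal := isMaximal_ker_aeval _
  have hM : RingHom.ker (aeval v : MvPolynomial σ R →ₐ[R] F) = M.under (MvPolynomial σ R) := by
    ext f
    have hf : aeval (algebraMap F L ∘ v) (algebraMap _ (MvPolynomial σ K) f) =
        algebraMap F L (aeval v f) := by
      rw [algebraMap_def, aeval_map_algebraMap, ← aeval_algebraMap_apply]
    rw [Ideal.mem_comap, RingHom.mem_ker, RingHom.mem_ker, hf,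
      map_eq_zero_iff _ (IsFractionRing.injective F L)]
  rw [hM, IsLocalization.height_under ((nonZeroDivisors R).map (C (σ := σ))) M,
    mvPolynomial_height_eq_card_of_isMaximal]

theorem ker_aeval_le_ker_aeval_comp {R A B σ : Type*} [CommRing R] [CommRing A] [CommRing B]
    [Algebra R A] [Algebra R B] (v : σ → A) (g : A →ₐ[R] B) :
    RingHom.ker (aeval v : MvPolynomial σ R →ₐ[R] A) ≤
      RingHom.ker (aeval (g ∘ v) : MvPolynomial σ R →ₐ[R] B) := by
  intro f hf
  have h : aeval (g ∘ v) f = g (aeval v f) := (comp_aeval_apply v g f).symm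
  rw [RingHom.mem_ker, h, hf, map_zero]

theorem ker_aeval_comp_of_injective {R A B σ : Type*} [CommRing R] [CommRing A] [CommRing B]
    [Algebra R A] [Algebra R B] (v : σ → A) {g : A →ₐ[R] B} (hg : Function.Injective g) :
    RingHom.ker (aeval (g ∘ v) : MvPolynomial σ R →ₐ[R] B) =
      RingHom.ker (aeval v : MvPolynomial σ R →ₐ[R] A) := by
  ext f
  have h : aeval (g ∘ v) f = g (aeval v f) := (comp_aeval_apply v g f).symm
  rw [RingHom.mem_ker, RingHom.mem_ker, h, map_eq_zero_iff g hg]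

theorem height_ker_aeval_comp_equiv {R A σ τ : Type*} [CommRing R] [CommRing A] [Algebra R A]
    (e : σ ≃ τ) (v : τ → A) :
    (RingHom.ker (aeval (v ∘ e) : MvPolynomial σ R →ₐ[R] A)).height =
      (RingHom.ker (aeval v : MvPolynomial τ R →ₐ[R] A)).height := by
  rw [← (renameEquiv R e).toRingEquiv.height_comap]
  congr 1
  ext f
  simp [RingHom.mem_ker, aeval_rename]

theorem height_ker_aeval_sumElim {R A σ τ : Type*} [CommRing R] [CommRing A] [IsDomain A]
    [Algebra R A] [Finite σ] (v : σ → A) {w : τ → A} (hw : IsTranscendenceBasis R w) :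
    (RingHom.ker (aeval (Sum.elim v w) : MvPolynomial (σ ⊕ τ) R →ₐ[R] A)).height =
      Nat.card σ := by
  have : Nontrivial R := (algebraMap R A).domain_nontrivial
  let _ : Algebra (MvPolynomial τ R) A := (aeval w).toAlgebra
  have : IsScalarTower R (MvPolynomial τ R) A := .of_algebraMap_eq' (aeval w).comp_algebraMap.symm
  have : FaithfulSMul (MvPolynomial τ R) A := (faithfulSMul_iff_algebraMap_injective _ _).2 hw.1
  have : Algebra.IsAlgebraic (MvPolynomial τ R) A := by
    have := hw.isAlgebraic
    exact .of_ringHom_of_comp_eq hw.1.aevalEquiv (RingHom.id A) (EquivLike.surjective _)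
      Function.injective_id (by ext <;> simp [RingHom.algebraMap_toAlgebra])
  rw [← height_ker_aeval_of_isAlgebraic (R := MvPolynomial τ R) v,
    ← (sumAlgEquiv R σ τ).toRingEquiv.height_comap]
  congr 1
  have h : (aeval (Sum.elim v w) : MvPolynomial (σ ⊕ τ) R →ₐ[R] A) =
      ((aeval v).restrictScalars R).comp (sumAlgEquiv R σ τ).toAlgHom := by
    ext (i | i)
    · simp
    · simp [RingHom.algebraMap_toAlgebra]
  rw [h]
  rfl

theorem height_ker_aeval_add_card {R A σ ι : Type*} [CommRing R] [CommRing A] [IsDomain A]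
    [Algebra R A] [Finite σ] (v : σ → A)
    [Algebra.IsAlgebraic (Algebra.adjoin R (Set.range v)) A] {x : ι → A}
    (hx : IsTranscendenceBasis R x) :
    (RingHom.ker (aeval v : MvPolynomial σ R →ₐ[R] A)).height + Nat.card ι = Nat.card σ := by
  have : Nontrivial R := (algebraMap R A).domain_nontrivial
  have := (faithfulSMul_iff_algebraMap_injective R A).2 hx.1.algebraMap_injective
  obtain ⟨t, htv, ht⟩ := exists_isTranscendenceBasis_subset (R := R) (Set.range v)
  obtain ⟨B, -, hB⟩ : ∃ B ⊆ Set.univ, Set.BijOn v B t :=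
    Set.surjOn_iff_exists_bijOn_subset.1 (by rwa [Set.SurjOn, Set.image_univ])
  have hw : IsTranscendenceBasis R (fun b : B ↦ v b) := ht.comp_equiv hB.equiv
  have hcard : Nat.card B = Nat.card ι := by
    simpa [Nat.card] using congrArg Cardinal.toNat (hw.lift_cardinalMk_eq hx)
  classical
  let e : ↥Bᶜ ⊕ B ≃ σ := (Equiv.sumComm _ _).trans (Equiv.Set.sumCompl B)
  have he : v ∘ e = Sum.elim (fun b : ↥Bᶜ ↦ v b) (fun b : B ↦ v b) := by
    ext (b | b) <;> simp [e]
  rw [← height_ker_aeval_comp_equiv e, he, height_ker_aeval_sumElim _ hw, ← hcard,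
    ← Nat.card_congr e, Nat.card_sum, Nat.cast_add]

/-- The ideal `P_T(G)` with the components of `G` on `[n] ∖ T` replaced by the fibres of an
arbitrary map `π` on a set `s` of vertices (so `s` is the complement of `T`): it is generated by
the `x_i, y_i` for `i ∉ s` and by the `2`-minors on pairs of columns in a common fibre. -/
def fiberMinorIdeal (R : Type*) [CommRing R] {V C : Type*} {s : Set V} (π : s → C) :
    Ideal (MvPolynomial (V ⊕ V) R) :=
  Ideal.span
    ({f | ∃ i ∉ s, f = X (Sum.inl i)} ∪ {f | ∃ i ∉ s, f = X (Sum.inr i)} ∪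
      {f | ∃ i j : s, π i = π j ∧
        f = X (Sum.inl (i : V)) * X (Sum.inr (j : V)) -
          X (Sum.inl (j : V)) * X (Sum.inr (i : V))})

/-- The `2 × V` matrix, encoded as a point with coordinates indexed by `V ⊕ V`, whose column
`i ∈ s` is `a i` times the vector `(p (π i), q (π i))` of its fibre, and whose other columns
vanish. -/
def rankOnePoint {V C A : Type*} [MulZeroClass A] {s : Set V} (π : s → C) (a : s → A)
    (p q : C → A) : V ⊕ V → A :=
  Sum.elim (Function.extend Subtype.val (fun i ↦ a i * p (π i)) 0)
    (Function.extend Subtype.val (fun i ↦ a i * q (π i)) 0)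

/-- The generic `rankOnePoint` in the affine chart `p = 1`: the variables `X (Sum.inl i)` are the
scalars of the columns and the variables `X (Sum.inr c)` are the slopes of the fibres. -/
def genericRankOnePoint (R : Type*) [CommRing R] {V C : Type*} {s : Set V} (π : s → C) :
    V ⊕ V → MvPolynomial (s ⊕ C) R :=
  rankOnePoint π (fun i ↦ X (Sum.inl i)) 1 (fun c ↦ X (Sum.inr c))

theorem exists_eq_mul_of_mul_eq_mul {ι F : Type*} [Field F] (x y : ι → F)
    (h : ∀ i j, x i * y j = x j * y i) :
    ∃ (p q : F) (a : ι → F), ∀ i, x i = a i * p ∧ y i = a i * q := by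
  by_cases hx : ∃ i, x i ≠ 0
  · obtain ⟨i₀, hi₀⟩ := hx
    refine ⟨1, y i₀ / x i₀, x, fun i ↦ ⟨(mul_one _).symm, ?_⟩⟩
    rw [← mul_div_assoc, eq_div_iff hi₀, h, mul_comm]
  · push Not at hx
    exact ⟨0, 1, y, fun i ↦ by simp [hx]⟩

section

variable {R V C : Type*} [CommRing R] {s : Set V} {π : s → C}

theorem fiberMinorIdeal_le_ker_aeval_iff {A : Type*} [CommRing A] [Algebra R A]
    {v : V ⊕ V → A} :
    fiberMinorIdeal R π ≤ RingHom.ker (aeval v : MvPolynomial (V ⊕ V) R →ₐ[R] A) ↔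
      (∀ i ∉ s, v (Sum.inl i) = 0 ∧ v (Sum.inr i) = 0) ∧
        ∀ i j : s, π i = π j → v (Sum.inl i) * v (Sum.inr j) = v (Sum.inl j) * v (Sum.inr i) := by
  rw [fiberMinorIdeal, Ideal.span_le, Set.union_subset_iff, Set.union_subset_iff]
  constructor
  · rintro ⟨⟨hx, hy⟩, hxy⟩
    refine ⟨fun i hi ↦ ⟨?_, ?_⟩, fun i j hij ↦ ?_⟩
    · simpa using hx ⟨i, hi, rfl⟩
    · simpa using hy ⟨i, hi, rfl⟩
    · simpa [sub_eq_zero] using hxy ⟨i, j, hij, rfl⟩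
  · rintro ⟨h, hxy⟩
    refine ⟨⟨?_, ?_⟩, ?_⟩
    · rintro _ ⟨i, hi, rfl⟩
      simp [h i hi]
    · rintro _ ⟨i, hi, rfl⟩
      simp [h i hi]
    · rintro _ ⟨i, j, hij, rfl⟩
      simp [hxy i j hij]

section

variable {A : Type*} [MulZeroClass A] {a : s → A} {p q : C → A}

@[simp]
theorem rankOnePoint_inl (i : s) : rankOnePoint π a p q (Sum.inl i) = a i * p (π i) := by
  rw [rankOnePoint, Sum.elim_inl, Subtype.val_injective.extend_apply]

@[simp]
theorem rankOnePoint_inr (i : s) : rankOnePoint π a p q (Sum.inr i) = a i * q (π i) := by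
  rw [rankOnePoint, Sum.elim_inr, Subtype.val_injective.extend_apply]

theorem rankOnePoint_inl_of_notMem {i : V} (hi : i ∉ s) :
    rankOnePoint π a p q (Sum.inl i) = 0 := by
  rw [rankOnePoint, Sum.elim_inl, Function.extend_apply' _ _ _ (by simpa), Pi.zero_apply]

theorem rankOnePoint_inr_of_notMem {i : V} (hi : i ∉ s) :
    rankOnePoint π a p q (Sum.inr i) = 0 := by
  rw [rankOnePoint, Sum.elim_inr, Function.extend_apply' _ _ _ (by simpa), Pi.zero_apply]

theorem eq_rankOnePoint {v : V ⊕ V → A}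
    (h₀ : ∀ i ∉ s, v (Sum.inl i) = 0 ∧ v (Sum.inr i) = 0)
    (h : ∀ i : s, v (Sum.inl i) = a i * p (π i) ∧ v (Sum.inr i) = a i * q (π i)) :
    v = rankOnePoint π a p q := by
  ext (i | i) <;> by_cases hi : i ∈ s
  · exact (h ⟨i, hi⟩).1.trans (rankOnePoint_inl ⟨i, hi⟩).symm
  · rw [(h₀ i hi).1, rankOnePoint_inl_of_notMem hi]
  · exact (h ⟨i, hi⟩).2.trans (rankOnePoint_inr ⟨i, hi⟩).symm
  · rw [(h₀ i hi).2, rankOnePoint_inr_of_notMem hi]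

end

theorem fiberMinorIdeal_le_ker_aeval_rankOnePoint {A : Type*} [CommRing A] [Algebra R A]
    (a : s → A) (p q : C → A) :
    fiberMinorIdeal R π ≤
      RingHom.ker (aeval (rankOnePoint π a p q) : MvPolynomial (V ⊕ V) R →ₐ[R] A) := by
  rw [fiberMinorIdeal_le_ker_aeval_iff]
  refine ⟨fun i hi ↦ ⟨rankOnePoint_inl_of_notMem hi, rankOnePoint_inr_of_notMem hi⟩,
    fun i j hij ↦ ?_⟩
  simp only [rankOnePoint_inl, rankOnePoint_inr, hij]
  ring

theorem exists_rankOnePoint_of_le_ker_aeval {F : Type*} [Field F] [Algebra R F]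
    {v : V ⊕ V → F}
    (hv : fiberMinorIdeal R π ≤ RingHom.ker (aeval v : MvPolynomial (V ⊕ V) R →ₐ[R] F)) :
    ∃ a p q, v = rankOnePoint π a p q := by
  obtain ⟨h₀, h⟩ := fiberMinorIdeal_le_ker_aeval_iff.1 hv
  choose p q a ha using fun c ↦ exists_eq_mul_of_mul_eq_mul
    (fun i : π ⁻¹' {c} ↦ v (Sum.inl i)) (fun i ↦ v (Sum.inr i))
    fun i j ↦ h i j (i.2.trans j.2.symm)
  exact ⟨fun i ↦ a (π i) ⟨i, rfl⟩, p, q, eq_rankOnePoint h₀ fun i ↦ ha (π i) ⟨i, rfl⟩⟩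

theorem map_comp_rankOnePoint {A B F : Type*} [MulZeroOneClass A] [MulZeroOneClass B]
    [FunLike F A B] [MonoidWithZeroHomClass F A B] (f : F) (a : s → A) (p q : C → A) :
    f ∘ rankOnePoint π a p q = rankOnePoint π (f ∘ a) (f ∘ p) (f ∘ q) :=
  eq_rankOnePoint
    (fun i hi ↦ by simp [rankOnePoint_inl_of_notMem hi, rankOnePoint_inr_of_notMem hi])
    (fun i ↦ by simp)

theorem rankOnePoint_eq_of_ne_zero {F : Type*} [Field F] (a : s → F) {p : C → F} (q : C → F)
    (hp : ∀ c, p c ≠ 0) :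
    rankOnePoint π a p q = rankOnePoint π (fun i ↦ a i * p (π i)) 1 (q / p) := by
  refine eq_rankOnePoint
    (fun i hi ↦ ⟨rankOnePoint_inl_of_notMem hi, rankOnePoint_inr_of_notMem hi⟩) fun i ↦ ?_
  simp [mul_assoc, mul_div_cancel₀, hp]

theorem ker_aeval_genericRankOnePoint_le_of_ne_zero {F : Type*} [Field F] [Algebra R F]
    (a : s → F) {p : C → F} (q : C → F) (hp : ∀ c, p c ≠ 0) :
    RingHom.ker (aeval (genericRankOnePoint R π) : MvPolynomial (V ⊕ V) R →ₐ[R] _) ≤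
      RingHom.ker (aeval (rankOnePoint π a p q) : MvPolynomial (V ⊕ V) R →ₐ[R] F) := by
  let φ : MvPolynomial (s ⊕ C) R →ₐ[R] F := aeval (Sum.elim (fun i ↦ a i * p (π i)) (q / p))
  have hφ : φ ∘ genericRankOnePoint R π = rankOnePoint π a p q := by
    rw [genericRankOnePoint, map_comp_rankOnePoint, rankOnePoint_eq_of_ne_zero a q hp]
    congr 1 <;> ext <;> simp [φ]
  exact hφ ▸ ker_aeval_le_ker_aeval_comp _ φ

theorem ker_aeval_genericRankOnePoint_le [IsDomain R] {A : Type*} [CommRing A] [Algebra R A]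
    (a : s → A) (p q : C → A) :
    RingHom.ker (aeval (genericRankOnePoint R π) : MvPolynomial (V ⊕ V) R →ₐ[R] _) ≤
      RingHom.ker (aeval (rankOnePoint π a p q) : MvPolynomial (V ⊕ V) R →ₐ[R] A) := by
  -- Where `p` vanishes, `(a, p, q)` is outside the affine chart of the generic point, but it is
  -- a specialization of the generic homogeneous point `(α, P, Q)`, whose `P` is invertible in `L`.
  let B := MvPolynomial (s ⊕ C ⊕ C) R
  let L := FractionRing B
  let ψ : B →ₐ[R] L := IsScalarTower.toAlgHom R B L
  have hψ : Function.Injective ψ := IsFractionRing.injective B L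
  let α : s → B := fun i ↦ X (Sum.inl i)
  let P : C → B := fun c ↦ X (Sum.inr (Sum.inl c))
  let Q : C → B := fun c ↦ X (Sum.inr (Sum.inr c))
  have hP (c : C) : (ψ ∘ P) c ≠ 0 := (map_ne_zero_iff ψ hψ).2 (X_ne_zero _)
  let χ : B →ₐ[R] A := aeval (Sum.elim a (Sum.elim p q))
  have hχ : χ ∘ rankOnePoint π α P Q = rankOnePoint π a p q := by
    rw [map_comp_rankOnePoint]
    congr 1 <;> ext <;> exact aeval_X ..
  calc RingHom.ker (aeval (genericRankOnePoint R π) : MvPolynomial (V ⊕ V) R →ₐ[R] _)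
    _ ≤ RingHom.ker (aeval (rankOnePoint π (ψ ∘ α) (ψ ∘ P) (ψ ∘ Q)) :
          MvPolynomial (V ⊕ V) R →ₐ[R] L) :=
        ker_aeval_genericRankOnePoint_le_of_ne_zero _ _ hP
    _ = RingHom.ker (aeval (rankOnePoint π α P Q) : MvPolynomial (V ⊕ V) R →ₐ[R] B) := by
        rw [← map_comp_rankOnePoint, ker_aeval_comp_of_injective _ hψ]
    _ ≤ _ := hχ ▸ ker_aeval_le_ker_aeval_comp _ χ

theorem radical_fiberMinorIdeal [IsDomain R] :
    (fiberMinorIdeal R π).radical =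
      RingHom.ker (aeval (genericRankOnePoint R π) : MvPolynomial (V ⊕ V) R →ₐ[R] _) := by
  apply le_antisymm
  · exact (RingHom.ker_isPrime _).radical_le_iff.2
      (fiberMinorIdeal_le_ker_aeval_rankOnePoint _ _ _)
  · rw [Ideal.radical_eq_sInf]
    refine le_sInf fun P ⟨hP, _⟩ ↦ ?_
    let v : V ⊕ V → P.ResidueField := fun k ↦ algebraMap _ _ (X k : MvPolynomial (V ⊕ V) R)
    have hv : RingHom.ker (aeval v : MvPolynomial (V ⊕ V) R →ₐ[R] P.ResidueField) = P := by
      ext f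
      have hf : aeval v f = algebraMap _ P.ResidueField f :=
        (aeval_algebraMap_apply _ _ _).trans (by rw [aeval_X_left_apply])
      rw [RingHom.mem_ker, hf, Ideal.algebraMap_residueField_eq_zero]
    obtain ⟨a, p, q, hpq⟩ := exists_rankOnePoint_of_le_ker_aeval (hP.trans_eq hv.symm)
    rw [← hv, hpq]
    exact ker_aeval_genericRankOnePoint_le a p q

theorem isAlgebraic_adjoin_range_genericRankOnePoint [IsDomain R] (hπ : Function.Surjective π) :
    Algebra.IsAlgebraic (Algebra.adjoin R (Set.range (genericRankOnePoint R π)))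
      (MvPolynomial (s ⊕ C) R) := by
  set S := Algebra.adjoin R (Set.range (genericRankOnePoint R π))
  have hS (k : V ⊕ V) : genericRankOnePoint R π k ∈ S := Algebra.subset_adjoin ⟨k, rfl⟩
  have hX (i : s) : (X (Sum.inl i) : MvPolynomial (s ⊕ C) R) ∈ S := by
    simpa [genericRankOnePoint] using hS (Sum.inl i)
  have hXZ (i : s) : (X (Sum.inl i) * X (Sum.inr (π i)) : MvPolynomial (s ⊕ C) R) ∈ S := by
    simpa [genericRankOnePoint] using hS (Sum.inr i)
  refine ⟨fun f ↦ ?_⟩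
  induction f using MvPolynomial.induction_on with
  | C r => exact isAlgebraic_algebraMap (algebraMap R S r)
  | add f g hf hg => exact hf.add hg
  | mul_X f k hf =>
    refine hf.mul ?_
    obtain i | c := k
    · exact isAlgebraic_algebraMap (⟨_, hX i⟩ : S)
    · obtain ⟨i, rfl⟩ := hπ c
      exact .of_mul (mem_nonZeroDivisors_of_ne_zero (X_ne_zero _))
        (isAlgebraic_algebraMap (⟨_, hX i⟩ : S)) (isAlgebraic_algebraMap (⟨_, hXZ i⟩ : S))

end

theorem htI_eq_height_radical {R : Type*} [CommRing R] {I : Ideal R} (hI : I.radical.IsPrime) :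
    htI I = I.radical.height := by
  apply le_antisymm
  · exact (iInf₂_le (⟨I.radical, hI⟩ : PrimeSpectrum R) Ideal.le_radical).trans_eq
      (PrimeSpectrum.height_eq_orderHeight _).symm
  · refine le_iInf₂ fun P hP ↦ ?_
    rw [← PrimeSpectrum.height_eq_orderHeight]
    exact Ideal.height_mono (P.isPrime.radical_le_iff.2 hP)

theorem PTIdeal_eq_fiberMinorIdeal (K : Type*) [Field K] {n : ℕ} (G : SimpleGraph (Fin n))
    (T : Set (Fin n)) :
    PTIdeal K G T = fiberMinorIdeal K (G.induce Tᶜ).connectedComponentMk := by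
  apply le_antisymm
  · refine Ideal.span_mono (Set.union_subset_union ?_ ?_)
    · simp
    · rintro f ⟨i, j, hi, hj, -, hij, rfl⟩
      exact ⟨⟨i, hi⟩, ⟨j, hj⟩, SimpleGraph.ConnectedComponent.sound hij, rfl⟩
  · refine Ideal.span_le.2 (Set.union_subset ?_ ?_)
    · exact .trans (fun f ↦ by simp) (Set.subset_union_left.trans Ideal.subset_span)
    · rintro f ⟨i, j, hij, rfl⟩
      obtain heq | hne := eq_or_ne (i : Fin n) j
      · simp [heq]
      · exact Ideal.subset_span
          (.inr ⟨i, j, i.2, j.2, hne, SimpleGraph.ConnectedComponent.exact hij, rfl⟩)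

theorem htI_PTIdeal_general (R : Type*) [CommRing R] [IsDomain R] {V C : Type*} [Finite V]
    {s : Set V} (π : s → C) (hπ : Function.Surjective π) :
    htI (fiberMinorIdeal R π) = ((Nat.card V + sᶜ.ncard - Nat.card C : ℕ) : ℕ∞) := by
  have : Finite C := .of_surjective π hπ
  have := isAlgebraic_adjoin_range_genericRankOnePoint (R := R) hπ
  have hheight := height_ker_aeval_add_card (genericRankOnePoint R π)
    (IsTranscendenceBasis.mvPolynomial (s ⊕ C) R)
  have hprime : (fiberMinorIdeal R π).radical.IsPrime := by
    rw [radical_fiberMinorIdeal]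
    exact RingHom.ker_isPrime _
  have hs := s.ncard_add_ncard_compl
  rw [← radical_fiberMinorIdeal, ← htI_eq_height_radical hprime, Nat.card_sum, Nat.card_sum,
    Nat.card_coe_set_eq] at hheight
  generalize htI (fiberMinorIdeal R π) = h at hheight ⊢
  lift h to ℕ using by rintro rfl; simp [-Nat.cast_add] at hheight
  norm_cast at hheight ⊢
  lia

/-- For every `T ⊆ [n]`, the height of `P_T(G)` equals
`n + |T| - c(T)`, where `c(T)` is the number of connected components of the subgraph
of `G` induced on `[n] ∖ T`. -/
theorem htI_PTIdeal (K : Type*) [Field K] (n : ℕ) (G : SimpleGraph (Fin n))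
    (T : Set (Fin n)) :
    htI (PTIdeal K G T) = ((n + T.ncard - cNum G Tᶜ : ℕ) : ℕ∞) := by
  rw [PTIdeal_eq_fiberMinorIdeal, htI_PTIdeal_general K _ fun c ↦ c.exists_rep, Nat.card_fin,
    compl_compl, cNum]

end
end
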